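/- arXiv:1404.4856 — 2 statements merged into one kernel-verified Lean document; each statement's English description precedes it below -/
import Mathlib

section
/- Let (G, [a, b]) be a single-interval mean-payoff game, where [a, b] ⊆ ℝ is a closed bounded interval. If Adam has a winning strategy (a strategy such that every consistent play π satisfies MP(π) ∉ [a, b]) then he has a positional winning strategy. -/
/-!
Let `R` be a maximal region on which Adam has a positional strategy driving the partial sums
linearly below slope `a` or above slope `b`. If `R` contains the initial vertex, Adam wins
positionally. Otherwise Eve defeats every strategy of Adam. By maximality Adam cannot force the play
into `R` from outside. Play there the energy games with weights `w - a` and `b - w`. A finite energy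
game splits into a part where Eve has a potential certifying that she keeps the energy bounded
below, and a part where Adam has a strict potential certifying that positionally he drives it to
`-∞` linearly; the latter part could be added to `R`, so it is empty outside `R`. Eve thus has a
potential for each of the two weights. Alternating between them she keeps both energies bounded
below, that is, the `k`-th partial sum in `[a * k - C, b * k + C]`.

The splitting of an energy game comes from value iteration: where the values converge their limit is
Eve's potential, and where they tend to `-∞` a tilted minimum of finitely many of them is Adam's.
-/

open Filter

/-- A game graph: vertex set `V`, Eve's vertices `Eve`, edge relation `E` (every vertex
has a successor), integer weight function `w`, and initial vertex `init`. -/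
structure GameGraph (V : Type) where
  Eve : Set V
  E : V → V → Prop
  w : V → V → ℤ
  init : V
  succ : ∀ v, ∃ u, E v u

namespace GameGraph

variable {V : Type}

/-- `π` is a play starting at vertex `v`. -/
def IsPlayFrom (G : GameGraph V) (v : V) (π : ℕ → V) : Prop :=
  π 0 = v ∧ ∀ i, G.E (π i) (π (i + 1))

/-- `π` is a play (from the initial vertex). -/
def IsPlay (G : GameGraph V) (π : ℕ → V) : Prop :=
  G.IsPlayFrom G.init π

/-- The prefix `π 0, …, π i` of a play, as a list. -/
def prefixList (π : ℕ → V) (i : ℕ) : List V :=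
  List.ofFn (fun j : Fin (i + 1) => π j)

/-- A (history-based) strategy for Eve is legal if it always proposes a successor
of the current (Eve) vertex. -/
def EveLegal (G : GameGraph V) (σ : List V → V) : Prop :=
  ∀ (l : List V) (v : V), v ∈ G.Eve → G.E v (σ (l ++ [v]))

/-- A (history-based) strategy for Adam is legal if it always proposes a successor
of the current (Adam) vertex. -/
def AdamLegal (G : GameGraph V) (σ : List V → V) : Prop :=
  ∀ (l : List V) (v : V), v ∉ G.Eve → G.E v (σ (l ++ [v]))

/-- The play `π` is consistent with Eve's strategy `σ`. -/
def ConsEve (G : GameGraph V) (σ : List V → V) (π : ℕ → V) : Prop :=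
  ∀ i, π i ∈ G.Eve → π (i + 1) = σ (prefixList π i)

/-- The play `π` is consistent with Adam's strategy `σ`. -/
def ConsAdam (G : GameGraph V) (σ : List V → V) (π : ℕ → V) : Prop :=
  ∀ i, π i ∉ G.Eve → π (i + 1) = σ (prefixList π i)

/-- Eve has a winning strategy for the objective `Win`. -/
def EveWins (G : GameGraph V) (Win : (ℕ → V) → Prop) : Prop :=
  ∃ σ : List V → V, G.EveLegal σ ∧ ∀ π, G.IsPlay π → G.ConsEve σ π → Win π

/-- Adam has a winning strategy: he can ensure the objective `Win` of Eve fails. -/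
def AdamWins (G : GameGraph V) (Win : (ℕ → V) → Prop) : Prop :=
  ∃ σ : List V → V, G.AdamLegal σ ∧ ∀ π, G.IsPlay π → G.ConsAdam σ π → ¬ Win π

/-- Consistency with a positional Eve strategy. -/
def ConsEvePos (G : GameGraph V) (f : V → V) (π : ℕ → V) : Prop :=
  ∀ i, π i ∈ G.Eve → π (i + 1) = f (π i)

/-- Consistency with a positional Adam strategy. -/
def ConsAdamPos (G : GameGraph V) (f : V → V) (π : ℕ → V) : Prop :=
  ∀ i, π i ∉ G.Eve → π (i + 1) = f (π i)

/-- Eve has a positional (memoryless) winning strategy. -/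
def EveWinsPos (G : GameGraph V) (Win : (ℕ → V) → Prop) : Prop :=
  ∃ f : V → V, (∀ v ∈ G.Eve, G.E v (f v)) ∧
    ∀ π, G.IsPlay π → G.ConsEvePos f π → Win π

/-- Adam has a positional (memoryless) winning strategy. -/
def AdamWinsPos (G : GameGraph V) (Win : (ℕ → V) → Prop) : Prop :=
  ∃ f : V → V, (∀ v, v ∉ G.Eve → G.E v (f v)) ∧
    ∀ π, G.IsPlay π → G.ConsAdamPos f π → ¬ Win π

/-- The run of the memory structure `(δ, m)` of a finite-state machine while
reading the play `π`: after `i` steps it has read `π 0, …, π (i-1)`. -/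
def memRun {M : Type} (δ : M → V → M) (m : M) (π : ℕ → V) : ℕ → M
  | 0 => m
  | i + 1 => δ (memRun δ m π i) (π i)

/-- Consistency of a play with the finite-memory strategy given by the machine
`(m0, δ, o)`: at step `i`, the machine has memory `memRun δ m0 π i` (having read
`π 0, …, π (i-1)`) and outputs the move `o (memRun δ m0 π i) (π i)`. -/
def ConsEveFM (G : GameGraph V) {M : Type} (m0 : M) (δ : M → V → M)
    (o : M → V → V) (π : ℕ → V) : Prop :=
  ∀ i, π i ∈ G.Eve → π (i + 1) = o (memRun δ m0 π i) (π i)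

/-- Eve has a finite-memory winning strategy, i.e. one computed by a
finite-state machine. -/
def EveWinsFM (G : GameGraph V) (Win : (ℕ → V) → Prop) : Prop :=
  ∃ (M : Type) (_ : Fintype M) (m0 : M) (δ : M → V → M) (o : M → V → V),
    (∀ m, ∀ v ∈ G.Eve, G.E v (o m v)) ∧
    ∀ π, G.IsPlay π → G.ConsEveFM m0 δ o π → Win π

/-- The total weight `w(π[..k])` of the length-`k` prefix of a play. -/
def partialSum (G : GameGraph V) (π : ℕ → V) (k : ℕ) : ℤ :=
  ∑ i ∈ Finset.range k, G.w (π i) (π (i + 1))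

/-- The (liminf) mean-payoff of a play. -/
noncomputable def MP (G : GameGraph V) (π : ℕ → V) : ℝ :=
  liminf (fun k => (G.partialSum π k : ℝ) / (k : ℝ)) atTop

/-- The liminf payoff of a play, in the extended reals. -/
noncomputable def liminfPayoff (G : GameGraph V) (π : ℕ → V) : EReal :=
  liminf (fun i => ((G.w (π i) (π (i + 1)) : ℝ) : EReal)) atTop

/-- The total-sum payoff of a play, in the extended reals. -/
noncomputable def totalPayoff (G : GameGraph V) (π : ℕ → V) : EReal :=
  liminf (fun k => ((G.partialSum π k : ℝ) : EReal)) atTop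

/-- The discounted sum of a play, with discount factor `lam`. -/
noncomputable def DS (G : GameGraph V) (lam : ℝ) (π : ℕ → V) : ℝ :=
  ∑' i : ℕ, lam ^ i * (G.w (π i) (π (i + 1)) : ℝ)

/-- A play of a (min-)parity game is winning for Eve iff the minimal priority
occurring infinitely often is even. -/
def ParityWin (Ω : V → ℕ) (π : ℕ → V) : Prop :=
  ∃ p, Even p ∧ (∀ N, ∃ k, N ≤ k ∧ Ω (π k) = p) ∧
    ∀ q, (∀ N, ∃ k, N ≤ k ∧ Ω (π k) = q) → p ≤ q

end GameGraph

open Set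

section Potentials

variable {α : Type*} {E : α → α → Prop} {P : Set α} {r : α → α → ℝ}

/-- The controllable predecessor of `Q`: the vertices at which the owner of `P`, moving along `E`
against an opponent who owns `Pᶜ`, can force the next vertex to lie in `Q`. -/
def CPre (E : α → α → Prop) (P Q : Set α) : Set α :=
  {x | (x ∈ P → ∃ u, E x u ∧ u ∈ Q) ∧ (x ∉ P → ∀ u, E x u → u ∈ Q)}

lemma mem_cpre_mono {Q Q' : Set α} {x : α} (hx : x ∈ CPre E P Q)
    (hQ : ∀ u, E x u → u ∈ Q → u ∈ Q') : x ∈ CPre E P Q' :=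
  ⟨fun hP => (hx.1 hP).imp fun u hu => ⟨hu.1, hQ u hu.1 hu.2⟩,
    fun hP u hu => hQ u hu (hx.2 hP u hu)⟩

lemma mem_cpre_compl_of_notMem {Q : Set α} {x : α} (hx : x ∉ CPre E P Q) :
    x ∈ CPre E Pᶜ Qᶜ := by
  by_cases hP : x ∈ P <;> simpa [CPre, hP] using hx

lemma exists_positional_of_mem_cpre (hE : ∀ x, ∃ u, E x u) {S : Set α} {Q : α → Set α}
    (hQ : ∀ x ∈ S, x ∈ CPre E P (Q x)) :
    ∃ f : α → α, (∀ x ∈ P, E x (f x)) ∧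
      ∀ x ∈ S, ∀ u, E x u → (x ∈ P → u = f x) → u ∈ Q x := by
  have hmove : ∀ x, ∃ u, E x u ∧ (x ∈ S → x ∈ P → u ∈ Q x) := fun x => by
    by_cases hx : x ∈ S ∧ x ∈ P
    · obtain ⟨u, hu, huQ⟩ := (hQ x hx.1).1 hx.2
      exact ⟨u, hu, fun _ _ => huQ⟩
    · exact (hE x).imp fun u hu => ⟨hu, fun hS hP => absurd ⟨hS, hP⟩ hx⟩
  choose f hfE hfQ using hmove
  refine ⟨f, fun x _ => hfE x, fun x hx u hu huf => ?_⟩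
  by_cases hP : x ∈ P
  · exact huf hP ▸ hfQ x hx hP
  · exact (hQ x hx).2 hP u hu

/-- `φ` is an energy potential on `S` for the owner of `P`: this player can keep the play in `S`
while the accumulated `r`-weight plus `φ` never decreases. -/
def IsPotential (E : α → α → Prop) (P S : Set α) (r : α → α → ℝ) (φ : α → ℝ) : Prop :=
  ∀ x ∈ S, x ∈ CPre E P {u | u ∈ S ∧ φ x ≤ r x u + φ u}

/-- The accumulated `r`-weight of the first `k` moves of `π`. -/
def energy (r : α → α → ℝ) (π : ℕ → α) (k : ℕ) : ℝ :=
  ∑ i ∈ Finset.range k, r (π i) (π (i + 1))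

lemma energy_succ (r : α → α → ℝ) (π : ℕ → α) (k : ℕ) :
    energy r π (k + 1) = energy r π k + r (π k) (π (k + 1)) :=
  Finset.sum_range_succ _ k

lemma energy_add (r : α → α → ℝ) (π : ℕ → α) (n k : ℕ) :
    energy r π (n + k) = energy r π n + energy r (fun i => π (n + i)) k :=
  Finset.sum_range_add _ n k

lemma energy_congr {π π' : ℕ → α} {k : ℕ} (h : ∀ i ≤ k, π i = π' i) :
    energy r π k = energy r π' k :=
  Finset.sum_congr rfl fun i hi => by
    have hik : i < k := Finset.mem_range.1 hi
    rw [h i hik.le, h (i + 1) hik]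

lemma bddBelow_energy_of_suffix {π : ℕ → α} (n : ℕ)
    (h : BddBelow (range (energy r fun i => π (n + i)))) : BddBelow (range (energy r π)) := by
  obtain ⟨C, hC⟩ := h
  refine (isBoundedUnder_of_eventually_ge (a := energy r π n + C)
    (eventually_atTop.2 ⟨n, fun k hk => ?_⟩)).bddBelow_range
  obtain ⟨j, rfl⟩ := Nat.exists_eq_add_of_le hk
  rw [energy_add]
  gcongr
  exact hC ⟨j, rfl⟩

lemma bddBelow_energy_of_potential [Finite α] (φ : α → ℝ) {π : ℕ → α}
    (hφ : ∀ k, energy r π k < 0 → φ (π k) ≤ r (π k) (π (k + 1)) + φ (π (k + 1))) :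
    BddBelow (range (energy r π)) := by
  obtain ⟨A, hA⟩ := (finite_range φ).bddAbove
  obtain ⟨B, hB⟩ := (finite_range φ).bddBelow
  obtain ⟨C, hC⟩ := (finite_range fun p : α × α => r p.1 p.2 + φ p.2).bddBelow
  have hlow : ∀ k, min B C ≤ energy r π k + φ (π k) := fun k => by
    induction k with
    | zero => simpa [energy] using Or.inl (hB ⟨π 0, rfl⟩)
    | succ k ih =>
      rw [energy_succ]
      rcases lt_or_ge (energy r π k) 0 with hneg | hpos
      · linarith [hφ k hneg]
      · linarith [min_le_right B C, hC ⟨(π k, π (k + 1)), rfl⟩]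
  refine ⟨min B C - A, ?_⟩
  rintro _ ⟨k, rfl⟩
  linarith [hlow k, hA ⟨π k, rfl⟩]

end Potentials

section EnergyGame

variable {α : Type*} {E : α → α → Prop} {P : Set α} {r : α → α → ℝ}

open Classical in
/-- The value of `f` at the successor of `x` when the owner of `P` maximises and the opponent
minimises; it is meaningful only if `x` has finitely many successors and at least one. -/
noncomputable def optValue (E : α → α → Prop) (P : Set α) (x : α) (f : α → ℝ) : ℝ :=
  if x ∈ P then ⨆ u : {u // E x u}, f u else ⨅ u : {u // E x u}, f u

lemma mem_cpre_optValue_le [Finite α] {x : α} (hx : ∃ u, E x u) (f : α → ℝ) :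
    x ∈ CPre E P {u | optValue E P x f ≤ f u} := by
  have : Nonempty {u // E x u} := nonempty_subtype.2 hx
  refine ⟨fun hP => ?_, fun hP u hu => ?_⟩
  · obtain ⟨u, hu⟩ := exists_eq_ciSup_of_finite (f := fun u : {u // E x u} => f u)
    exact ⟨u, u.2, ((if_pos hP).trans hu.symm).le⟩
  · exact (if_neg hP).trans_le
      (ciInf_le (f := fun u : {u // E x u} => f u) (finite_range _).bddBelow ⟨u, hu⟩)

lemma mem_cpre_compl_le_optValue [Finite α] {x : α} (hx : ∃ u, E x u) (f : α → ℝ) :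
    x ∈ CPre E Pᶜ {u | f u ≤ optValue E P x f} := by
  have : Nonempty {u // E x u} := nonempty_subtype.2 hx
  refine ⟨fun hP => ?_, fun hP u hu => ?_⟩
  · obtain ⟨u, hu⟩ := exists_eq_ciInf_of_finite (f := fun u : {u // E x u} => f u)
    exact ⟨u, u.2, (hu.trans (if_neg hP).symm).le⟩
  · exact (le_ciSup (f := fun u : {u // E x u} => f u) (finite_range _).bddAbove ⟨u, hu⟩).trans_eq
      (if_pos (notMem_compl_iff.1 hP)).symm

lemma optValue_mono [Finite α] (x : α) : Monotone (optValue E P x) := fun f g hfg => by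
  unfold optValue
  split_ifs
  · exact ciSup_mono (finite_range _).bddAbove fun u => hfg u
  · exact ciInf_mono (finite_range _).bddBelow fun u => hfg u

/-- Value iteration for the energy game: `energyValue E P r n x` is the value, for the owner of
`P`, of the lowest energy reached during the first `n` moves from `x`. -/
noncomputable def energyValue (E : α → α → Prop) (P : Set α) (r : α → α → ℝ) (n : ℕ) : α → ℝ :=
  (fun m x => min 0 (optValue E P x fun u => r x u + m u))^[n] 0

lemma energyValue_succ (n : ℕ) (x : α) : energyValue E P r (n + 1) x =
    min 0 (optValue E P x fun u => r x u + energyValue E P r n u) := by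
  simp only [energyValue, Function.iterate_succ_apply']

lemma energyValue_antitone [Finite α] : Antitone (energyValue E P r) :=
  Monotone.antitone_iterate_of_map_le
    (fun _ _ h x => min_le_min le_rfl (optValue_mono x fun u => by gcongr; exact h u))
    fun _ => min_le_left _ _

lemma mem_cpre_energyValue_succ_le [Finite α] {x : α} (hx : ∃ u, E x u) (n : ℕ) :
    x ∈ CPre E P {u | energyValue E P r (n + 1) x ≤ r x u + energyValue E P r n u} :=
  mem_cpre_mono (mem_cpre_optValue_le hx _) fun _ _ hu =>
    (energyValue_succ n x).trans_le ((min_le_right _ _).trans hu)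

lemma mem_cpre_compl_le_energyValue_succ [Finite α] {x : α} (hx : ∃ u, E x u) {n : ℕ}
    (hneg : energyValue E P r (n + 1) x < 0) :
    x ∈ CPre E Pᶜ {u | r x u + energyValue E P r n u ≤ energyValue E P r (n + 1) x} := by
  rw [energyValue_succ] at hneg ⊢
  rw [min_eq_right ((min_lt_iff.1 hneg).resolve_left (lt_irrefl 0)).le]
  exact mem_cpre_compl_le_optValue hx _

/-- The vertices from which the opponent of `P` can force the energy arbitrarily low. -/
def drainedSet (E : α → α → Prop) (P : Set α) (r : α → α → ℝ) : Set α :=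
  {x | ¬ BddBelow (range fun n => energyValue E P r n x)}

lemma eventually_energyValue_lt [Finite α] {x : α} (hx : x ∈ drainedSet E P r) (c : ℝ) :
    ∀ᶠ n in atTop, energyValue E P r n x < c := by
  obtain ⟨_, ⟨n, rfl⟩, hn⟩ := not_bddBelow_iff.1 hx c
  exact eventually_atTop.2 ⟨n, fun k hk => (energyValue_antitone hk x).trans_lt hn⟩

lemma exists_isPotential_compl_drainedSet [Finite α] (hE : ∀ x, ∃ u, E x u) :
    ∃ φ, IsPotential E P (drainedSet E P r)ᶜ r φ := by
  let φ : α → ℝ := fun x => ⨅ n, energyValue E P r n x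
  refine ⟨φ, fun x hx => ?_⟩
  have hφx : ∀ n, φ x ≤ energyValue E P r n x := ciInf_le (not_not.1 hx)
  have hlim : ∀ u, ∀ᶠ n in atTop, φ x ≤ r x u + energyValue E P r n u →
      u ∈ (drainedSet E P r)ᶜ ∧ φ x ≤ r x u + φ u := fun u => by
    by_cases hu : u ∈ drainedSet E P r
    · filter_upwards [eventually_energyValue_lt hu (φ x - r x u)] with n hn hle
      linarith
    by_cases hle : φ x ≤ r x u + φ u
    · exact .of_forall fun n _ => ⟨hu, hle⟩
    · obtain ⟨n, hn⟩ := exists_lt_of_ciInf_lt (lt_sub_iff_add_lt'.2 (not_le.1 hle))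
      filter_upwards [eventually_ge_atTop n] with k hk hle'
      linarith [energyValue_antitone (E := E) (P := P) (r := r) hk u]
  obtain ⟨n, hn⟩ := (eventually_all.2 hlim).exists
  exact mem_cpre_mono (mem_cpre_energyValue_succ_le (hE x) n) fun u _ hu =>
    hn u ((hφx _).trans hu)

lemma eventually_mem_cpre_compl_drainedSet [Finite α] (hE : ∀ x, ∃ u, E x u) :
    ∀ᶠ n in atTop, ∀ x ∈ drainedSet E P r, x ∈ CPre E Pᶜ {u | u ∈ drainedSet E P r ∧
      r x u + energyValue E P r n u ≤ energyValue E P r (n + 1) x} := by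
  have hstay : ∀ x ∈ drainedSet E P r, ∀ u, ∀ᶠ n in atTop,
      r x u + energyValue E P r n u ≤ energyValue E P r (n + 1) x → u ∈ drainedSet E P r := by
    intro x hx u
    by_cases hu : u ∈ drainedSet E P r
    · exact .of_forall fun _ _ => hu
    obtain ⟨C, hC⟩ := not_not.1 hu
    filter_upwards [(tendsto_add_atTop_nat 1).eventually
      (eventually_energyValue_lt hx (r x u + C))] with n hn hle
    linarith [hC ⟨n, rfl⟩]
  refine eventually_all.2 fun x => ?_
  by_cases hx : x ∈ drainedSet E P r
  · filter_upwards [eventually_all.2 (hstay x hx), (tendsto_add_atTop_nat 1).eventually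
      (eventually_energyValue_lt hx 0)] with n hn hneg _
    exact mem_cpre_mono (mem_cpre_compl_le_energyValue_succ (hE x) hneg) fun u _ hu =>
      ⟨hn u hu, hu⟩
  · exact .of_forall fun _ h => absurd h hx

-- One move trades `energyValue (i + 1)` for `energyValue i`. Tilting by `i * ε` makes this a gain
-- of `ε`, and over a window long enough for the values to drop by `1` the tilted minimum is not
-- attained at the first index, so that this trade is available at the minimiser.
lemma exists_isPotential_drainedSet [Finite α] (hE : ∀ x, ∃ u, E x u) :
    ∃ ε > 0, ∃ ψ, IsPotential E Pᶜ (drainedSet E P r) (fun x u => -r x u - ε) ψ := by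
  obtain ⟨n, hn⟩ := eventually_atTop.1
    (eventually_mem_cpre_compl_drainedSet (E := E) (P := P) (r := r) hE)
  obtain ⟨N, hnN, hN⟩ : ∃ N ≥ n, ∀ x ∈ drainedSet E P r,
      energyValue E P r N x < energyValue E P r n x - 1 :=
    ((eventually_ge_atTop n).and (eventually_all.2 fun x =>
      eventually_imp_distrib_left.2 fun hx => eventually_energyValue_lt hx _)).exists
  obtain ⟨M, rfl⟩ := Nat.exists_eq_add_of_le hnN
  obtain ⟨ε, hε, hεM⟩ : ∃ ε > (0 : ℝ), M * ε ≤ 1 :=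
    ⟨1 / (M + 1), by positivity, by rw [mul_one_div, div_le_one (by positivity)]; linarith⟩
  let tilt : α → Fin (M + 1) → ℝ := fun x i => energyValue E P r (n + i) x + i * ε
  have tilt_ge : ∀ x i, ⨅ j, tilt x j ≤ tilt x i := fun x =>
    ciInf_le (finite_range (tilt x)).bddBelow
  refine ⟨ε, hε, fun x => -⨅ i, tilt x i, fun x hx => ?_⟩
  obtain ⟨i, hi⟩ := exists_eq_ciInf_of_finite (f := tilt x)
  have hi0 : i ≠ 0 := by
    rintro rfl
    have hlast := hi.trans_le (tilt_ge x (Fin.last M))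
    simp only [tilt, Fin.val_zero, Nat.cast_zero, zero_mul, add_zero, Fin.val_last] at hlast
    linarith [hN x hx]
  obtain ⟨j, rfl⟩ := Fin.exists_succ_eq_of_ne_zero hi0
  refine mem_cpre_mono (hn (n + j) (Nat.le_add_right n j) x hx) fun u _ ⟨huT, hu⟩ => ⟨huT, ?_⟩
  have hju := tilt_ge u j.castSucc
  simp only [tilt, Fin.val_succ, Fin.val_castSucc, Nat.cast_add, Nat.cast_one,
    ← add_assoc] at hi hju
  linarith

end EnergyGame

section MeanPayoff

lemma tendsto_add_div_natCast (c C : ℝ) :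
    Tendsto (fun k : ℕ => c + C / (k : ℝ)) atTop (nhds c) := by
  simpa using (tendsto_const_div_atTop_nhds_zero_nat C).const_add c

lemma le_liminf_div_of_bddBelow {s : ℕ → ℝ} {c : ℝ}
    (hs : IsBoundedUnder (· ≤ ·) atTop fun k => s k / k)
    (h : BddBelow (range fun k : ℕ => s k - c * k)) : c ≤ liminf (fun k => s k / k) atTop := by
  obtain ⟨C, hC⟩ := h
  have hlim := tendsto_add_div_natCast c C
  rw [← hlim.liminf_eq]
  refine liminf_le_liminf ?_ hlim.isBoundedUnder_ge hs.isCoboundedUnder_ge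
  filter_upwards [eventually_gt_atTop 0] with k hk
  have hk' : (0 : ℝ) < k := Nat.cast_pos.2 hk
  rw [le_div_iff₀ hk', add_mul, div_mul_cancel₀ _ hk'.ne']
  linarith [hC ⟨k, rfl⟩]

lemma liminf_div_le_of_bddBelow {s : ℕ → ℝ} {c : ℝ}
    (hs : IsBoundedUnder (· ≥ ·) atTop fun k => s k / k)
    (h : BddBelow (range fun k : ℕ => c * k - s k)) : liminf (fun k => s k / k) atTop ≤ c := by
  obtain ⟨C, hC⟩ := h
  have hlim := tendsto_add_div_natCast c (-C)
  rw [← hlim.liminf_eq]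
  refine liminf_le_liminf ?_ hs hlim.isBoundedUnder_le.isCoboundedUnder_ge
  filter_upwards [eventually_gt_atTop 0] with k hk
  have hk' : (0 : ℝ) < k := Nat.cast_pos.2 hk
  rw [div_le_iff₀ hk', add_mul, div_mul_cancel₀ _ hk'.ne']
  linarith [hC ⟨k, rfl⟩]

end MeanPayoff

namespace GameGraph

variable {V : Type} {G : GameGraph V}

section MeanPayoff

variable {π : ℕ → V} {a b c : ℝ}

lemma exists_abs_partialSum_div_le [Finite V] (G : GameGraph V) (π : ℕ → V) :
    ∃ M : ℝ, ∀ k : ℕ, |(G.partialSum π k : ℝ) / k| ≤ M := by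
  obtain ⟨M, hM⟩ := (finite_range fun p : V × V => |(G.w p.1 p.2 : ℝ)|).bddAbove
  have hw : ∀ x u, |(G.w x u : ℝ)| ≤ M := fun x u => hM ⟨(x, u), rfl⟩
  have hM0 : 0 ≤ M := (abs_nonneg _).trans (hw G.init G.init)
  refine ⟨M, fun k => ?_⟩
  rw [abs_div, Nat.abs_cast, partialSum, Int.cast_sum]
  refine div_le_of_le_mul₀ k.cast_nonneg hM0 ?_
  calc |∑ i ∈ Finset.range k, (G.w (π i) (π (i + 1)) : ℝ)|
      ≤ ∑ i ∈ Finset.range k, |(G.w (π i) (π (i + 1)) : ℝ)| := Finset.abs_sum_le_sum_abs _ _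
    _ ≤ ∑ _i ∈ Finset.range k, M := Finset.sum_le_sum fun i _ => hw _ _
    _ = M * k := by simp [mul_comm]

lemma energy_w_sub (G : GameGraph V) (π : ℕ → V) (c : ℝ) (k : ℕ) :
    energy (fun x u => G.w x u - c) π k = G.partialSum π k - c * k := by
  simp [energy, partialSum, mul_comm]

lemma energy_sub_w (G : GameGraph V) (π : ℕ → V) (c : ℝ) (k : ℕ) :
    energy (fun x u => c - G.w x u) π k = c * k - G.partialSum π k := by
  simp [energy, partialSum, mul_comm]

lemma le_MP_of_bddBelow_energy [Finite V]
    (h : BddBelow (range (energy (fun x u => G.w x u - c) π))) : c ≤ G.MP π := by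
  obtain ⟨M, hM⟩ := G.exists_abs_partialSum_div_le π
  rw [funext (G.energy_w_sub π c)] at h
  exact le_liminf_div_of_bddBelow (isBoundedUnder_of ⟨M, fun k => (abs_le.1 (hM k)).2⟩) h

lemma MP_le_of_bddBelow_energy [Finite V]
    (h : BddBelow (range (energy (fun x u => c - G.w x u) π))) : G.MP π ≤ c := by
  obtain ⟨M, hM⟩ := G.exists_abs_partialSum_div_le π
  rw [funext (G.energy_sub_w π c)] at h
  exact liminf_div_le_of_bddBelow (isBoundedUnder_of ⟨-M, fun k => (abs_le.1 (hM k)).1⟩) h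

/-- The sequences whose partial sums stay, up to a constant, below a line of slope less than `a` or
above a line of slope greater than `b`. Adam wins positionally for this objective, which implies
`MP π ∉ [a, b]` and is visibly insensitive to finite prefixes. -/
def escapeSet (G : GameGraph V) (a b : ℝ) : Set (ℕ → V) :=
  {π | (∃ c < a, BddBelow (range (energy (fun x u => c - G.w x u) π))) ∨
    ∃ c > b, BddBelow (range (energy (fun x u => G.w x u - c) π))}

lemma MP_notMem_Icc_of_mem_escapeSet [Finite V] (hπ : π ∈ G.escapeSet a b) :
    G.MP π ∉ Icc a b := by
  rcases hπ with ⟨c, hc, h⟩ | ⟨c, hc, h⟩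
  · exact fun hm => ((MP_le_of_bddBelow_energy h).trans_lt hc).not_ge hm.1
  · exact fun hm => (hc.trans_le (le_MP_of_bddBelow_energy h)).not_ge hm.2

lemma mem_escapeSet_of_suffix (n : ℕ) (hπ : (fun i => π (n + i)) ∈ G.escapeSet a b) :
    π ∈ G.escapeSet a b :=
  hπ.imp (fun ⟨c, hc, h⟩ => ⟨c, hc, bddBelow_energy_of_suffix n h⟩)
    fun ⟨c, hc, h⟩ => ⟨c, hc, bddBelow_energy_of_suffix n h⟩

end MeanPayoff

section AdamRegion

variable {W : Set (ℕ → V)} {R T : Set V}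

/-- A region that Adam wins positionally for the objective `W`: some positional strategy of his
never leaves `R` and makes every play from `R` belong to `W`. -/
def AdamRegion (G : GameGraph V) (W : Set (ℕ → V)) (R : Set V) : Prop :=
  ∃ f : V → V, (∀ x, x ∉ G.Eve → G.E x (f x)) ∧
    (∀ x ∈ R, ∀ u, G.E x u → (x ∉ G.Eve → u = f x) → u ∈ R) ∧
    ∀ x ∈ R, ∀ π, G.IsPlayFrom x π → G.ConsAdamPos f π → π ∈ W

lemma AdamRegion.adamWinsPos (hR : G.AdamRegion W R) (hinit : G.init ∈ R)
    {Win : (ℕ → V) → Prop} (hWin : ∀ π ∈ W, ¬ Win π) : G.AdamWinsPos Win :=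
  let ⟨f, hf, _, hfW⟩ := hR
  ⟨f, hf, fun π hπ hc => hWin π (hfW _ hinit π hπ hc)⟩

lemma adamRegion_empty (G : GameGraph V) (W : Set (ℕ → V)) : G.AdamRegion W ∅ := by
  choose f hf using G.succ
  exact ⟨f, fun x _ => hf x, fun _ hx => hx.elim, fun _ hx => hx.elim⟩

lemma exists_maximal_adamRegion [Finite V] (G : GameGraph V) (W : Set (ℕ → V)) :
    ∃ R, Maximal (G.AdamRegion W) R :=
  (toFinite {R | G.AdamRegion W R}).exists_maximal ⟨∅, G.adamRegion_empty W⟩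

lemma AdamRegion.union (hR : G.AdamRegion W R)
    (hW : ∀ n π, (fun i => π (n + i)) ∈ W → π ∈ W) {Q : V → Set V}
    (hQ : ∀ x ∈ T \ R, x ∈ CPre G.E G.Eveᶜ (Q x)) (hQT : ∀ x ∈ T \ R, Q x ⊆ R ∪ T)
    (hQW : ∀ π : ℕ → V, (∀ i, π i ∈ T \ R) → (∀ i, π (i + 1) ∈ Q (π i)) → π ∈ W) :
    G.AdamRegion W (R ∪ T) := by
  classical
  obtain ⟨f, hfE, hfR, hfW⟩ := hR
  obtain ⟨g, hgE, hgQ⟩ := exists_positional_of_mem_cpre G.succ hQ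
  have closed : ∀ x ∈ R ∪ T, ∀ u, G.E x u → (x ∉ G.Eve → u = R.piecewise f g x) → u ∈ R ∪ T := by
    intro x hx u hu hux
    by_cases hxR : x ∈ R
    · exact Or.inl (hfR x hxR u hu (by simpa [hxR] using hux))
    · have hxT : x ∈ T \ R := ⟨hx.resolve_left hxR, hxR⟩
      exact hQT x hxT (hgQ x hxT u hu (by simpa [hxR] using hux))
  refine ⟨R.piecewise f g, fun x hx => ?_, closed, ?_⟩
  · by_cases hxR : x ∈ R
    · simpa [hxR] using hfE x hx
    · simpa [hxR] using hgE x hx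
  rintro _ h0 π ⟨rfl, hπ⟩ hc
  by_cases hn : ∃ n, π n ∈ R
  · obtain ⟨n, hn⟩ := hn
    have hstay : ∀ i, π (n + i) ∈ R := fun i => by
      induction i with
      | zero => exact hn
      | succ i ih => exact hfR _ ih _ (hπ _) fun hE =>
        (hc _ hE).trans (piecewise_eq_of_mem R f g ih)
    exact hW n π (hfW _ hn _ ⟨rfl, fun i => hπ (n + i)⟩
      fun i hE => (hc (n + i) hE).trans (piecewise_eq_of_mem R f g (hstay i)))
  · push Not at hn
    have hstay : ∀ i, π i ∈ R ∪ T := fun i => by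
      induction i with
      | zero => exact h0
      | succ i ih => exact closed _ ih _ (hπ i) (hc i)
    have hT : ∀ i, π i ∈ T \ R := fun i => ⟨(hstay i).resolve_left (hn i), hn i⟩
    exact hQW π hT fun i =>
      hgQ _ (hT i) _ (hπ i) fun hE => (hc i hE).trans (piecewise_eq_of_notMem R f g (hn i))

lemma mem_cpre_compl_of_maximal (hR : Maximal (G.AdamRegion W) R)
    (hW : ∀ n π, (fun i => π (n + i)) ∈ W → π ∈ W) {x : V} (hx : x ∉ R) :
    x ∈ CPre G.E G.Eve Rᶜ := by
  have hregion : G.AdamRegion W (R ∪ CPre G.E G.Eveᶜ R) :=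
    hR.1.union hW (Q := fun _ => R) (fun _ hy => hy.1) (fun _ _ => subset_union_left)
      fun π hπ hπR => absurd (hπR 0) (hπ 1).2
  have hnot : x ∉ CPre G.E G.Eveᶜ R := fun h => hx (hR.2 hregion subset_union_left (Or.inr h))
  simpa only [compl_compl] using mem_cpre_compl_of_notMem hnot

lemma exists_isPotential_compl_of_maximal [Finite V] (hR : Maximal (G.AdamRegion W) R)
    (hW : ∀ n π, (fun i => π (n + i)) ∈ W → π ∈ W) {r : V → V → ℝ}
    (hr : ∀ ε > 0, ∀ π, BddBelow (range (energy (fun x u => -r x u - ε) π)) → π ∈ W) :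
    ∃ φ, IsPotential G.E G.Eve Rᶜ r φ := by
  have hRc : ∀ x ∉ R, x ∈ CPre G.E G.Eve Rᶜ := fun x => mem_cpre_compl_of_maximal hR hW
  -- Eve may not enter `R`; the moves inside `R` are kept only to make `E'` total.
  let E' : V → V → Prop := fun x u => G.E x u ∧ (u ∈ R → x ∈ R)
  have hE' : ∀ x, ∃ u, E' x u := fun x => by
    obtain ⟨u, hu⟩ := G.succ x
    by_cases hx : x ∈ R
    · exact ⟨u, hu, fun _ => hx⟩
    by_cases hxE : x ∈ G.Eve
    · exact ((hRc x hx).1 hxE).imp fun v hv => ⟨hv.1, fun h => absurd h hv.2⟩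
    · exact ⟨u, hu, fun h => absurd h ((hRc x hx).2 hxE u hu)⟩
  obtain ⟨ε, hε, ψ, hψ⟩ := exists_isPotential_drainedSet (P := G.Eve) (r := r) hE'
  obtain ⟨φ, hφ⟩ := exists_isPotential_compl_drainedSet (P := G.Eve) (r := r) hE'
  have hregion : G.AdamRegion W (R ∪ drainedSet E' G.Eve r) := by
    refine hR.1.union hW
      (Q := fun x => R ∪ {u | u ∈ drainedSet E' G.Eve r ∧ ψ x ≤ -r x u - ε + ψ u})
      (fun x hx => ⟨fun hxE => ?_, fun hxE u hu => ?_⟩)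
      (fun x _ => union_subset_union_right R fun u hu => hu.1) fun π hπ hπψ => ?_
    · obtain ⟨u, hu, huψ⟩ := (hψ x hx.1).1 hxE
      exact ⟨u, hu.1, Or.inr huψ⟩
    · exact or_iff_not_imp_left.2 fun huR =>
        (hψ x hx.1).2 hxE u ⟨hu, fun h => absurd h huR⟩
    · exact hr ε hε π (bddBelow_energy_of_potential ψ fun k _ =>
        ((hπψ k).resolve_left (hπ (k + 1)).2).2)
  have hdrained : drainedSet E' G.Eve r ⊆ R :=
    subset_union_right.trans (hR.2 hregion subset_union_left)
  refine ⟨φ, fun x hx => ?_⟩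
  have hxφ := hφ x (compl_subset_compl.2 hdrained hx)
  refine ⟨fun hxE => ?_, fun hxE u hu => ?_⟩
  · obtain ⟨u, hu, huφ⟩ := hxφ.1 hxE
    exact ⟨u, hu.1, fun h => hx (hu.2 h), huφ.2⟩
  · have huR := (hRc x hx).2 hxE u hu
    exact ⟨huR, (hxφ.2 hxE u ⟨hu, fun h => absurd h huR⟩).2⟩

end AdamRegion

section EveStrategy

lemma exists_seq_of_nonanticipating (v : V) {next : ℕ → (ℕ → V) → V}
    (hnext : ∀ i π π', (∀ j ≤ i, π j = π' j) → next i π = next i π') :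
    ∃ π : ℕ → V, π 0 = v ∧ ∀ i, π (i + 1) = next i π := by
  let ρ : ℕ → ℕ → V := fun n =>
    Nat.rec (fun _ => v) (fun n ρ => Function.update ρ (n + 1) (next n ρ)) n
  have hρ : ∀ n, ρ (n + 1) = Function.update (ρ n) (n + 1) (next n (ρ n)) := fun _ => rfl
  have hagree : ∀ j n, j ≤ n → ρ n j = ρ j j := fun j n hjn => by
    induction n, hjn using Nat.le_induction with
    | base => rfl
    | succ n hjn ih => rw [hρ, Function.update_of_ne (by omega), ih]
  refine ⟨fun n => ρ n n, rfl, fun i => ?_⟩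
  change ρ (i + 1) (i + 1) = _
  rw [hρ, Function.update_self]
  exact hnext i _ _ fun j hj => hagree j i hj

lemma prefixList_congr {π π' : ℕ → V} {i : ℕ} (h : ∀ j ≤ i, π j = π' j) :
    prefixList π i = prefixList π' i :=
  congrArg List.ofFn (funext fun j => h j (Nat.lt_succ_iff.1 j.2))

lemma AdamLegal.edge_prefixList {σ : List V → V} (hσ : G.AdamLegal σ) {π : ℕ → V} {i : ℕ}
    (hi : π i ∉ G.Eve) : G.E (π i) (σ (prefixList π i)) := by
  have hlast : prefixList π i = List.ofFn (fun j : Fin i => π j) ++ [π i] := by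
    rw [prefixList, List.ofFn_succ', List.concat_eq_append]; rfl
  exact hlast ▸ hσ _ _ hi

lemma exists_play_consAdam {σ : List V → V} (hσ : G.AdamLegal σ) {τ : ℕ → (ℕ → V) → V}
    (hτ : ∀ i π π', (∀ j ≤ i, π j = π' j) → τ i π = τ i π')
    (hτE : ∀ i π, π i ∈ G.Eve → G.E (π i) (τ i π)) :
    ∃ π, G.IsPlay π ∧ G.ConsAdam σ π ∧ ∀ i, π i ∈ G.Eve → π (i + 1) = τ i π := by
  classical
  obtain ⟨π, h0, hnext⟩ := exists_seq_of_nonanticipating G.init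
    (next := fun i π => if π i ∈ G.Eve then τ i π else σ (prefixList π i))
    fun i π π' h => by rw [h i le_rfl, hτ i π π' h, prefixList_congr h]
  have hAdam : G.ConsAdam σ π := fun i hi => (hnext i).trans (if_neg hi)
  have hEve : ∀ i, π i ∈ G.Eve → π (i + 1) = τ i π := fun i hi => (hnext i).trans (if_pos hi)
  refine ⟨π, ⟨h0, fun i => ?_⟩, hAdam, hEve⟩
  by_cases hi : π i ∈ G.Eve
  · exact hEve i hi ▸ hτE i π hi
  · exact hAdam i hi ▸ hσ.edge_prefixList hi

-- Eve follows `φ₁` while the first energy is negative and `φ₂` otherwise. As the two energies add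
-- up to something nonnegative, the second one is negative only while she follows `φ₂`.
lemma exists_play_bddBelow_energy [Finite V] {S : Set V} (hinit : G.init ∈ S)
    {r₁ r₂ : V → V → ℝ} (hr : ∀ x u, 0 ≤ r₁ x u + r₂ x u) {φ₁ φ₂ : V → ℝ}
    (h₁ : IsPotential G.E G.Eve S r₁ φ₁) (h₂ : IsPotential G.E G.Eve S r₂ φ₂)
    {σ : List V → V} (hσ : G.AdamLegal σ) :
    ∃ π, G.IsPlay π ∧ G.ConsAdam σ π ∧
      BddBelow (range (energy r₁ π)) ∧ BddBelow (range (energy r₂ π)) := by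
  classical
  obtain ⟨g₁, hg₁E, hg₁⟩ := exists_positional_of_mem_cpre G.succ h₁
  obtain ⟨g₂, hg₂E, hg₂⟩ := exists_positional_of_mem_cpre G.succ h₂
  obtain ⟨π, hπ, hAdam, hEve⟩ := exists_play_consAdam hσ
    (τ := fun i π => if energy r₁ π i < 0 then g₁ (π i) else g₂ (π i))
    (fun i π π' h => by rw [energy_congr h, h i le_rfl])
    (fun i π hi => by split_ifs; exacts [hg₁E _ hi, hg₂E _ hi])
  have step₁ : ∀ i, π i ∈ S → energy r₁ π i < 0 →
      π (i + 1) ∈ S ∧ φ₁ (π i) ≤ r₁ (π i) (π (i + 1)) + φ₁ (π (i + 1)) := fun i hi hneg =>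
    hg₁ _ hi _ (hπ.2 i) fun hE => (hEve i hE).trans (if_pos hneg)
  have step₂ : ∀ i, π i ∈ S → ¬ energy r₁ π i < 0 →
      π (i + 1) ∈ S ∧ φ₂ (π i) ≤ r₂ (π i) (π (i + 1)) + φ₂ (π (i + 1)) := fun i hi hneg =>
    hg₂ _ hi _ (hπ.2 i) fun hE => (hEve i hE).trans (if_neg hneg)
  have hS : ∀ i, π i ∈ S := fun i => by
    induction i with
    | zero => exact hπ.1 ▸ hinit
    | succ i ih =>
      by_cases hneg : energy r₁ π i < 0
      exacts [(step₁ i ih hneg).1, (step₂ i ih hneg).1]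
  have hsum : ∀ i, 0 ≤ energy r₁ π i + energy r₂ π i := fun i => by
    rw [energy, energy, ← Finset.sum_add_distrib]
    exact Finset.sum_nonneg fun j _ => hr _ _
  exact ⟨π, hπ, hAdam, bddBelow_energy_of_potential φ₁ fun i hneg => (step₁ i (hS i) hneg).2,
    bddBelow_energy_of_potential φ₂ fun i hneg =>
      (step₂ i (hS i) fun h => by linarith [hsum i]).2⟩

end EveStrategy

end GameGraph

/-- In a single-interval mean-payoff game `(G, [a, b])`, if Adam
has a winning strategy (ensuring `MP(π) ∉ [a, b]` for every consistent play), then he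
has a positional winning strategy. -/
theorem stmt9 {V : Type} [Fintype V] (G : GameGraph V) (a b : ℝ) (hab : a ≤ b) :
    G.AdamWins (fun π => G.MP π ∈ Set.Icc a b) →
      G.AdamWinsPos (fun π => G.MP π ∈ Set.Icc a b) := by
  rintro ⟨σ, hσ, hσwin⟩
  obtain ⟨R, hR⟩ := G.exists_maximal_adamRegion (G.escapeSet a b)
  by_cases hinit : G.init ∈ R
  · exact hR.1.adamWinsPos hinit fun _ => GameGraph.MP_notMem_Icc_of_mem_escapeSet
  have hsuffix : ∀ n π, (fun i => π (n + i)) ∈ G.escapeSet a b → π ∈ G.escapeSet a b :=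
    fun n _ => GameGraph.mem_escapeSet_of_suffix n
  obtain ⟨φ₁, hφ₁⟩ := GameGraph.exists_isPotential_compl_of_maximal hR hsuffix
    (r := fun x u => G.w x u - a)
    fun ε hε π h => Or.inl ⟨a - ε, sub_lt_self a hε, by convert h using 5; ring⟩
  obtain ⟨φ₂, hφ₂⟩ := GameGraph.exists_isPotential_compl_of_maximal hR hsuffix
    (r := fun x u => b - G.w x u)
    fun ε hε π h => Or.inr ⟨b + ε, lt_add_of_pos_right b hε, by convert h using 5; ring⟩
  obtain ⟨π, hπ, hcons, hlow, hhigh⟩ :=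
    GameGraph.exists_play_bddBelow_energy hinit (fun x u => by linarith) hφ₁ hφ₂ hσ
  exact absurd ⟨GameGraph.le_MP_of_bddBelow_energy hlow,
    GameGraph.MP_le_of_bddBelow_energy hhigh⟩ (hσwin π hπ hcons)
end

section
/- Let (G, I, λ) be an interval discounted sum game where λ ∈ (0, 1) and I ⊆ ℝ is an interval with nonempty interior (a non-singleton interval). If Eve has a winning strategy (a strategy ensuring DS_λ(π) ∈ I for every consistent play π) then she has a finite-memory winning strategy, i.e., a winning strategy computed by a finite-state machine. -/
open Filter

/-!
The discounted sums of the vertex sequences extending a history of length `K` fill a set of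
diameter `O(λ ^ K)`. Since `I` contains two distinct points, for `K` large such a set cannot stick
out of `I` on both sides, so after `K` steps only one endpoint of `I` matters and Eve's objective
becomes to make the discounted sum either as large or as small as possible. Both objectives have
positional optimal strategies, read off the fixed point of the Shapley operator.

Eve therefore plays her winning strategy `σ` for `K` steps and then, depending on the history
recorded so far, maximises or minimises positionally. Comparing a resulting play with the play that
shares its first `K` steps and then opposes `σ` to an optimal Adam shows that it is winning: the
second play is winning, and by optimality the first one lies on the harmless side of it.
-/

open scoped NNReal
open Bornology (IsBounded)

/-! ### Order-connected sets and short sets -/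

lemma isUpperSet_or_isLowerSet_of_sub_le {α : Type*} [AddCommGroup α] [LinearOrder α]
    [IsOrderedAddMonoid α] {I : Set α} (hI : I.OrdConnected) {a b : α} (ha : a ∈ I) (hb : b ∈ I)
    {S : Set α} (hS : ∀ x ∈ S, ∀ y ∈ S, x - y ≤ b - a) :
    IsUpperSet (Subtype.val ⁻¹' I : Set S) ∨ IsLowerSet (Subtype.val ⁻¹' I : Set S) := by
  by_contra! h
  simp only [IsUpperSet, IsLowerSet, not_forall] at h
  obtain ⟨⟨x, y, hxy, hx, hy⟩, x', y', hyx', hx', hy'⟩ := h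
  have above : b < y := lt_of_not_ge fun hyb => hy (hI.out hx hb ⟨hxy, hyb⟩)
  have below : (y' : α) < a := lt_of_not_ge fun hay => hy' (hI.out ha hx' ⟨hay, hyx'⟩)
  exact (sub_lt_sub above below).not_ge (hS y y.2 y' y'.2)

/-! ### Discounted series -/

lemma summable_pow_mul_of_isBounded {lam : ℝ} (h : |lam| < 1) {r : ℕ → ℝ}
    (hr : IsBounded (Set.range r)) : Summable fun i => lam ^ i * r i := by
  obtain ⟨B, hB⟩ := hr.exists_norm_le
  refine .of_norm_bounded ((summable_geometric_of_abs_lt_one h).norm.mul_right B) fun i => ?_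
  rw [norm_mul]
  exact mul_le_mul_of_nonneg_left (hB _ ⟨i, rfl⟩) (norm_nonneg _)

lemma hasSum_pow_mul_sub_mul_succ {lam : ℝ} (h : |lam| < 1) {x : ℕ → ℝ}
    (hx : IsBounded (Set.range x)) : HasSum (fun i => lam ^ i * (x i - lam * x (i + 1))) (x 0) := by
  have hsum := summable_pow_mul_of_isBounded h hx
  have htail := (summable_nat_add_iff 1).2 hsum
  have htel := hsum.hasSum.sub htail.hasSum
  rw [hsum.tsum_eq_zero_add, add_sub_cancel_right, pow_zero, one_mul] at htel
  exact htel.congr_fun fun i => by ring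

lemma isBounded_range_comp {ι α β : Type*} [Finite α] [PseudoMetricSpace β] (y : α → β)
    (p : ι → α) : IsBounded (Set.range fun i => y (p i)) :=
  (Set.finite_range y).isBounded.subset (Set.range_comp_subset_range p y)

namespace GameGraph

variable {V : Type}

/-! ### Histories -/

/-- The first `n` vertices of a sequence; `prefixList π n` has one vertex more. -/
def history (π : ℕ → V) (n : ℕ) : List V :=
  (List.range n).map π

lemma length_history (π : ℕ → V) (n : ℕ) : (history π n).length = n := by
  simp [history]

lemma history_succ (π : ℕ → V) (n : ℕ) : history π (n + 1) = history π n ++ [π n] := by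
  simp [history, List.range_succ]

lemma prefixList_eq_history_append (π : ℕ → V) (n : ℕ) :
    prefixList π n = history π n ++ [π n] := by
  rw [← history_succ, history, ← List.map_coe_finRange_eq_range, prefixList, List.ofFn_eq_map,
    List.map_map]
  rfl

lemma history_eq_history_iff {π ρ : ℕ → V} {n : ℕ} :
    history π n = history ρ n ↔ ∀ i < n, π i = ρ i := by
  simp only [history, List.map_inj_left, List.mem_range]

lemma take_history (π : ℕ → V) (k n : ℕ) : (history π n).take k = history π (min k n) := by
  simp only [history, ← List.map_take, List.take_range]

lemma exists_forall_succ_eq_history (v : V) (next : List V → V → V) :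
    ∃ π : ℕ → V, π 0 = v ∧ ∀ i, π (i + 1) = next (history π i) (π i) := by
  let state : ℕ → List V × V := Nat.rec ([], v) fun _ s => (s.1 ++ [s.2], next s.1 s.2)
  have hstate (n : ℕ) : history (fun i => (state i).2) n = (state n).1 := by
    induction n with
    | zero => rfl
    | succ n ih => rw [history_succ, ih]
  exact ⟨fun i => (state i).2, rfl, fun i => by rw [hstate]⟩

/-! ### Discounted sums of sequences with a common beginning -/

section DiscountedSum

variable [Finite V] (G : GameGraph V) {lam : ℝ}

lemma summable_DS (h : |lam| < 1) (π : ℕ → V) :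
    Summable fun i => lam ^ i * (G.w (π i) (π (i + 1)) : ℝ) :=
  summable_pow_mul_of_isBounded h
    (isBounded_range_comp (fun e : V × V => (G.w e.1 e.2 : ℝ)) fun i => (π i, π (i + 1)))

lemma DS_eq_sum_add_DS_shift (h : |lam| < 1) (π : ℕ → V) (K : ℕ) :
    G.DS lam π = ∑ i ∈ Finset.range K, lam ^ i * (G.w (π i) (π (i + 1)) : ℝ)
      + lam ^ K * G.DS lam fun i => π (i + K) := by
  rw [DS, DS, ← (G.summable_DS h π).sum_add_tsum_nat_add K, ← tsum_mul_left]
  congr! 3 with i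
  rw [add_right_comm i K 1]
  ring

lemma DS_sub_DS_of_agree (h : |lam| < 1) {π ρ : ℕ → V} {K : ℕ} (hK : ∀ i ≤ K, π i = ρ i) :
    G.DS lam π - G.DS lam ρ =
      lam ^ K * (G.DS lam (fun i => π (i + K)) - G.DS lam fun i => ρ (i + K)) := by
  have common : ∑ i ∈ Finset.range K, lam ^ i * (G.w (π i) (π (i + 1)) : ℝ) =
      ∑ i ∈ Finset.range K, lam ^ i * (G.w (ρ i) (ρ (i + 1)) : ℝ) :=
    Finset.sum_congr rfl fun i hi => by
      have hiK := Finset.mem_range.1 hi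
      rw [hK i hiK.le, hK (i + 1) hiK]
  rw [G.DS_eq_sum_add_DS_shift h π K, G.DS_eq_sum_add_DS_shift h ρ K, common]
  ring

lemma isBounded_range_DS (h : |lam| < 1) : IsBounded (Set.range (G.DS lam)) := by
  obtain ⟨B, hB⟩ :=
    (Set.finite_range fun e : V × V => (G.w e.1 e.2 : ℝ)).isBounded.exists_norm_le
  have hgeom := (summable_geometric_of_abs_lt_one h).norm.hasSum.mul_right B
  refine isBounded_iff_forall_norm_le.2
    ⟨_, Set.forall_mem_range.2 fun π => tsum_of_norm_bounded hgeom fun i => ?_⟩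
  rw [norm_mul]
  exact mul_le_mul_of_nonneg_left (hB _ ⟨(π i, π (i + 1)), rfl⟩) (norm_nonneg _)

lemma exists_forall_dist_DS_lt (h : |lam| < 1) {ε : ℝ} (hε : 0 < ε) :
    ∃ K, ∀ π ρ : ℕ → V, (∀ i ≤ K, π i = ρ i) → dist (G.DS lam π) (G.DS lam ρ) < ε := by
  obtain ⟨D, hD⟩ := Metric.isBounded_iff.1 (G.isBounded_range_DS h)
  have hlim : Filter.Tendsto (fun K => |lam| ^ K * D) .atTop (nhds 0) := by
    simpa using (tendsto_pow_atTop_nhds_zero_of_lt_one (abs_nonneg lam) h).mul_const D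
  obtain ⟨K, hK⟩ := (hlim.eventually_lt_const hε).exists
  refine ⟨K, fun π ρ hag => lt_of_le_of_lt ?_ hK⟩
  rw [Real.dist_eq, G.DS_sub_DS_of_agree h hag, abs_mul, abs_pow]
  exact mul_le_mul_of_nonneg_left (hD ⟨_, rfl⟩ ⟨_, rfl⟩) (by positivity)

end DiscountedSum

/-! ### The Shapley operator -/

section Shapley

variable (G : GameGraph V) (A : Set V)

open Classical in
/-- The Shapley operator of the discounted game in which the owner of the vertices in `A` maximises
and the opponent minimises. Taking `A` to be Eve's or Adam's vertices covers both objectives of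
Eve. -/
noncomputable def shapley (lam : ℝ) (x : V → ℝ) (v : V) : ℝ :=
  if v ∈ A then ⨆ u : {u // G.E v u}, (G.w v u + lam * x u)
  else ⨅ u : {u // G.E v u}, (G.w v u + lam * x u)

lemma nonempty_successor (v : V) : Nonempty {u // G.E v u} :=
  nonempty_subtype.2 (G.succ v)

variable {G A} {lam : ℝ} {v u : V}

lemma le_shapley [Finite V] (x : V → ℝ) (hv : v ∈ A) (hu : G.E v u) :
    G.w v u + lam * x u ≤ G.shapley A lam x v := by
  rw [shapley, if_pos hv]
  exact le_ciSup (f := fun u : {u // G.E v u} => G.w v u + lam * x u)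
    (Set.finite_range _).bddAbove ⟨u, hu⟩

lemma shapley_le [Finite V] (x : V → ℝ) (hv : v ∉ A) (hu : G.E v u) :
    G.shapley A lam x v ≤ G.w v u + lam * x u := by
  rw [shapley, if_neg hv]
  exact ciInf_le (f := fun u : {u // G.E v u} => G.w v u + lam * x u)
    (Set.finite_range _).bddBelow ⟨u, hu⟩

variable (G A lam)

lemma exists_shapley_eq [Finite V] (x : V → ℝ) (v : V) :
    ∃ u, G.E v u ∧ G.shapley A lam x v = G.w v u + lam * x u := by
  have := G.nonempty_successor v
  let payoff : {u // G.E v u} → ℝ := fun u => G.w v u + lam * x u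
  by_cases hv : v ∈ A
  · obtain ⟨u, hu⟩ := exists_eq_ciSup_of_finite (f := payoff)
    exact ⟨u, u.2, by rw [shapley, if_pos hv, ← hu]⟩
  · obtain ⟨u, hu⟩ := exists_eq_ciInf_of_finite (f := payoff)
    exact ⟨u, u.2, by rw [shapley, if_neg hv, ← hu]⟩

lemma shapley_le_add_mul_dist [Fintype V] (h0 : 0 ≤ lam) (x y : V → ℝ) (v : V) :
    G.shapley A lam x v ≤ G.shapley A lam y v + lam * dist x y := by
  have step (u : V) : G.w v u + lam * x u ≤ G.w v u + lam * y u + lam * dist x y := by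
    have hdist : x u - y u ≤ dist x y := (le_abs_self _).trans (dist_le_pi_dist x y u)
    have := mul_le_mul_of_nonneg_left hdist h0
    linarith
  by_cases hv : v ∈ A
  · obtain ⟨u, hu, hxu⟩ := G.exists_shapley_eq A lam x v
    rw [hxu]
    exact (step u).trans (add_le_add_left (le_shapley y hv hu) _)
  · obtain ⟨u, hu, hyu⟩ := G.exists_shapley_eq A lam y v
    rw [hyu]
    exact (shapley_le x hv hu).trans (step u)

lemma contractingWith_shapley [Fintype V] {lam : ℝ≥0} (h1 : lam < 1) :
    ContractingWith lam (G.shapley A lam) := by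
  refine ⟨h1, .of_dist_le_mul fun x y => (dist_pi_le_iff (by positivity)).2 fun v => ?_⟩
  rw [Real.dist_eq, abs_sub_le_iff]
  constructor
  · exact sub_le_iff_le_add'.2 (G.shapley_le_add_mul_dist A lam lam.2 x y v)
  · rw [dist_comm]
    exact sub_le_iff_le_add'.2 (G.shapley_le_add_mul_dist A lam lam.2 y x v)

end Shapley

/-! ### Optimal positional strategies -/

/-- `val` solves the optimality equations of the discounted game in which the owner of `A` maximises
and the opponent minimises, and `f` is a positional choice of both players attaining the optima. -/
structure IsOptimal (G : GameGraph V) (lam : ℝ) (A : Set V) (val : V → ℝ) (f : V → V) : Prop where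
  edge : ∀ v, G.E v (f v)
  val_eq : ∀ v, val v = G.w v (f v) + lam * val (f v)
  le_val : ∀ v ∈ A, ∀ u, G.E v u → G.w v u + lam * val u ≤ val v
  val_le : ∀ v ∉ A, ∀ u, G.E v u → val v ≤ G.w v u + lam * val u

lemma exists_isOptimal [Finite V] (G : GameGraph V) {lam : ℝ} (h0 : 0 ≤ lam) (h1 : lam < 1)
    (A : Set V) : ∃ val f, G.IsOptimal lam A val f := by
  have := Fintype.ofFinite V
  lift lam to ℝ≥0 using h0
  have hc := G.contractingWith_shapley A (NNReal.coe_lt_one.1 h1)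
  let val := hc.fixedPoint
  have hfix (v : V) : G.shapley A lam val v = val v := congrFun hc.fixedPoint_isFixedPt v
  choose f hedge hf using G.exists_shapley_eq A lam val
  exact ⟨val, f, hedge, fun v => hfix v ▸ hf v, fun v hv u hu => hfix v ▸ le_shapley val hv hu,
    fun v hv u hu => hfix v ▸ shapley_le val hv hu⟩

namespace IsOptimal

variable [Finite V] {G : GameGraph V} {lam : ℝ} {A : Set V} {val : V → ℝ} {f : V → V}
  {π ρ : ℕ → V}

lemma val_le_DS (hopt : G.IsOptimal lam A val f) (h0 : 0 ≤ lam) (h1 : lam < 1)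
    (hπ : ∀ i, G.E (π i) (π (i + 1))) (hf : ∀ i, π i ∈ A → π (i + 1) = f (π i)) :
    val (π 0) ≤ G.DS lam π := by
  have h : |lam| < 1 := (abs_of_nonneg h0).trans_lt h1
  refine hasSum_le (fun i => mul_le_mul_of_nonneg_left ?_ (pow_nonneg h0 i))
    (hasSum_pow_mul_sub_mul_succ h (isBounded_range_comp val π)) (G.summable_DS h π).hasSum
  rw [sub_le_iff_le_add]
  by_cases hi : π i ∈ A
  · exact (hf i hi ▸ hopt.val_eq (π i)).le
  · exact hopt.val_le _ hi _ (hπ i)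

lemma DS_le_val (hopt : G.IsOptimal lam A val f) (h0 : 0 ≤ lam) (h1 : lam < 1)
    (hπ : ∀ i, G.E (π i) (π (i + 1))) (hf : ∀ i, π i ∉ A → π (i + 1) = f (π i)) :
    G.DS lam π ≤ val (π 0) := by
  have h : |lam| < 1 := (abs_of_nonneg h0).trans_lt h1
  refine hasSum_le (fun i => mul_le_mul_of_nonneg_left ?_ (pow_nonneg h0 i))
    (G.summable_DS h π).hasSum (hasSum_pow_mul_sub_mul_succ h (isBounded_range_comp val π))
  rw [le_sub_iff_add_le]
  by_cases hi : π i ∈ A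
  · exact hopt.le_val _ hi _ (hπ i)
  · exact (hf i hi ▸ hopt.val_eq (π i)).ge

lemma DS_le_DS (hopt : G.IsOptimal lam A val f) (h0 : 0 ≤ lam) (h1 : lam < 1)
    (hρ : ∀ i, G.E (ρ i) (ρ (i + 1))) (hπ : ∀ i, G.E (π i) (π (i + 1)))
    {K : ℕ} (hag : ∀ i ≤ K, ρ i = π i)
    (hρf : ∀ i, K ≤ i → ρ i ∉ A → ρ (i + 1) = f (ρ i))
    (hπf : ∀ i, K ≤ i → π i ∈ A → π (i + 1) = f (π i)) :
    G.DS lam ρ ≤ G.DS lam π := by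
  have tails : (G.DS lam fun i => ρ (i + K)) ≤ G.DS lam fun i => π (i + K) := calc
    _ ≤ val (ρ (0 + K)) := hopt.DS_le_val h0 h1
      (fun i => add_right_comm i 1 K ▸ hρ (i + K))
      (fun i hi => add_right_comm i 1 K ▸ hρf (i + K) (by omega) hi)
    _ = val (π (0 + K)) := by rw [zero_add, hag K le_rfl]
    _ ≤ _ := hopt.val_le_DS h0 h1
      (fun i => add_right_comm i 1 K ▸ hπ (i + K))
      (fun i hi => add_right_comm i 1 K ▸ hπf (i + K) (by omega) hi)
  rw [← sub_nonpos, G.DS_sub_DS_of_agree ((abs_of_nonneg h0).trans_lt h1) hag]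
  exact mul_nonpos_of_nonneg_of_nonpos (pow_nonneg h0 K) (sub_nonpos.2 tails)

end IsOptimal

/-! ### Switching from a strategy to a positional one -/

/-- `π` is a play in which Eve follows the strategy `σ` in the first `K` steps and moves by the
positional choice `f` afterwards. -/
structure FollowsThen (G : GameGraph V) (σ : List V → V) (K : ℕ) (f : V → V) (π : ℕ → V) :
    Prop where
  isPlay : G.IsPlay π
  eq_strategy : ∀ i < K, π i ∈ G.Eve → π (i + 1) = σ (prefixList π i)
  eq_positional : ∀ i, K ≤ i → π i ∈ G.Eve → π (i + 1) = f (π i)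

lemma exists_deviation (G : GameGraph V) {σ : List V → V} (hσ : G.EveLegal σ)
    {f : V → V} (hf : ∀ v, G.E v (f v)) {π : ℕ → V} (hπ : G.IsPlay π) {K : ℕ}
    (hπσ : ∀ i < K, π i ∈ G.Eve → π (i + 1) = σ (prefixList π i)) :
    ∃ ρ, G.IsPlay ρ ∧ G.ConsEve σ ρ ∧ (∀ i ≤ K, ρ i = π i) ∧
      ∀ i, K ≤ i → ρ i ∉ G.Eve → ρ (i + 1) = f (ρ i) := by
  classical
  obtain ⟨ρ, hρ0, hρ⟩ := exists_forall_succ_eq_history (π 0) fun l v =>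
    if l.length < K then π (l.length + 1) else if v ∈ G.Eve then σ (l ++ [v]) else f v
  simp only [length_history, ← prefixList_eq_history_append] at hρ
  have hag : ∀ i ≤ K, ρ i = π i
    | 0, _ => hρ0
    | i + 1, hi => by rw [hρ, if_pos (Nat.lt_of_succ_le hi)]
  refine ⟨ρ, ⟨hρ0.trans hπ.1, fun i => ?_⟩, fun i hv => ?_, hag, fun i hi hv => ?_⟩
  · by_cases hi : i < K
    · rw [hag i hi.le, hag (i + 1) hi]
      exact hπ.2 i
    · rw [hρ, if_neg hi]
      split_ifs with hv
      · rw [prefixList_eq_history_append]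
        exact hσ _ _ hv
      · exact hf _
  · by_cases hi : i < K
    · have hprefix : prefixList ρ i = prefixList π i := by
        simp only [prefixList_eq_history_append, ← history_succ, history_eq_history_iff]
        exact fun j hj => hag j (by omega)
      rw [hag i hi.le] at hv
      rw [hag (i + 1) hi, hπσ i hi hv, hprefix]
    · rw [hρ, if_neg hi, if_pos hv]
  · rw [hρ, if_neg hi.not_gt, if_neg hv]

lemma exists_positional_DS_ge [Finite V] (G : GameGraph V) {lam : ℝ} (h0 : 0 ≤ lam) (h1 : lam < 1)
    {σ : List V → V} (hσ : G.EveLegal σ) :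
    ∃ f : V → V, (∀ v, G.E v (f v)) ∧ ∀ K π, G.FollowsThen σ K f π →
      ∃ ρ, G.IsPlay ρ ∧ G.ConsEve σ ρ ∧ (∀ i ≤ K, ρ i = π i) ∧ G.DS lam ρ ≤ G.DS lam π := by
  obtain ⟨val, f, hopt⟩ := G.exists_isOptimal h0 h1 G.Eve
  refine ⟨f, hopt.edge, fun K π hπ => ?_⟩
  obtain ⟨ρ, hρ, hρσ, hag, hρf⟩ := G.exists_deviation hσ hopt.edge hπ.isPlay hπ.eq_strategy
  exact ⟨ρ, hρ, hρσ, hag, hopt.DS_le_DS h0 h1 hρ.2 hπ.isPlay.2 hag hρf hπ.eq_positional⟩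

lemma exists_positional_DS_le [Finite V] (G : GameGraph V) {lam : ℝ} (h0 : 0 ≤ lam) (h1 : lam < 1)
    {σ : List V → V} (hσ : G.EveLegal σ) :
    ∃ f : V → V, (∀ v, G.E v (f v)) ∧ ∀ K π, G.FollowsThen σ K f π →
      ∃ ρ, G.IsPlay ρ ∧ G.ConsEve σ ρ ∧ (∀ i ≤ K, ρ i = π i) ∧ G.DS lam π ≤ G.DS lam ρ := by
  obtain ⟨val, f, hopt⟩ := G.exists_isOptimal h0 h1 G.Eveᶜ
  refine ⟨f, hopt.edge, fun K π hπ => ?_⟩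
  obtain ⟨ρ, hρ, hρσ, hag, hρf⟩ := G.exists_deviation hσ hopt.edge hπ.isPlay hπ.eq_strategy
  exact ⟨ρ, hρ, hρσ, hag, hopt.DS_le_DS h0 h1 hπ.isPlay.2 hρ.2 (fun i hi => (hag i hi).symm)
    (fun i hi hv => hπ.eq_positional i hi (not_not.1 hv)) hρf⟩

/-! ### The finite-state machine -/

/-- Memory update recording the first `K` vertices of a play and ignoring the later ones. -/
def recordUpTo (K : ℕ) (l : {l : List V // l.length ≤ K}) (v : V) : {l : List V // l.length ≤ K} :=
  ⟨(l.1 ++ [v]).take K, List.length_take_le _ _⟩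

lemma memRun_recordUpTo (K : ℕ) (π : ℕ → V) (i : ℕ) :
    (memRun (recordUpTo K) ⟨[], K.zero_le⟩ π i).1 = history π (min K i) := by
  induction i with
  | zero => simp [memRun, history]
  | succ i ih =>
    simp only [memRun, recordUpTo, ih]
    rcases lt_or_ge i K with hi | hi
    · rw [min_eq_right hi.le, ← history_succ, take_history]
    · rw [min_eq_left hi, List.take_append_of_le_length (length_history π K).ge, take_history,
        min_self, min_eq_left (by omega)]

theorem eveWinsFM_of_switch [Finite V] (G : GameGraph V) {σ : List V → V} (hσ : G.EveLegal σ)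
    {g : List V → V → V} (hg : ∀ l v, v ∈ G.Eve → G.E v (g l v)) (K : ℕ) {Win : (ℕ → V) → Prop}
    (hwin : ∀ π, G.FollowsThen σ K (g (history π K)) π → Win π) : G.EveWinsFM Win := by
  have : Finite {l : List V // l.length ≤ K} := (List.finite_length_le V K).to_subtype
  refine ⟨_, Fintype.ofFinite _, ⟨[], K.zero_le⟩, recordUpTo K,
    fun l v => if l.1.length < K then σ (l.1 ++ [v]) else g l.1 v, fun l v hv => ?_,
    fun π hπ hcons => hwin π ⟨hπ, fun i hi hv => ?_, fun i hi hv => ?_⟩⟩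
  · dsimp only
    split_ifs
    · exact hσ _ _ hv
    · exact hg _ _ hv
  · simp only [hcons i hv, memRun_recordUpTo, min_eq_right hi.le, length_history, if_pos hi,
      prefixList_eq_history_append]
  · simp only [hcons i hv, memRun_recordUpTo, min_eq_left hi, length_history, lt_irrefl, if_false]

/-! ### Eventually one-sided objectives -/

/-- The discounted sums of the vertex sequences that extend the history `l`. Sequences that do not
follow the edges of the game are included. -/
def outcomes (G : GameGraph V) (lam : ℝ) (l : List V) : Set ℝ :=
  G.DS lam '' {π | history π l.length = l}

lemma DS_mem_outcomes_history (G : GameGraph V) (lam : ℝ) {π ρ : ℕ → V} {K : ℕ}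
    (h : ∀ i < K, ρ i = π i) : G.DS lam ρ ∈ G.outcomes lam (history π K) :=
  ⟨ρ, by simpa only [Set.mem_ofPred_eq, length_history] using history_eq_history_iff.2 h, rfl⟩

lemma exists_isUpperSet_or_isLowerSet_outcomes [Finite V] (G : GameGraph V) {lam : ℝ}
    (h : |lam| < 1) {I : Set ℝ} (hI : I.OrdConnected) (hnontriv : I.Nontrivial) :
    ∃ K, ∀ l : List V, l.length = K →
      IsUpperSet (Subtype.val ⁻¹' I : Set (G.outcomes lam l)) ∨
      IsLowerSet (Subtype.val ⁻¹' I : Set (G.outcomes lam l)) := by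
  obtain ⟨a, ha, b, hb, hab⟩ := hnontriv.exists_lt
  obtain ⟨K, hK⟩ := G.exists_forall_dist_DS_lt h (sub_pos.2 hab)
  refine ⟨K + 1, fun l hl => isUpperSet_or_isLowerSet_of_sub_le hI ha hb ?_⟩
  rintro _ ⟨π, hπ, rfl⟩ _ ⟨ρ, hρ, rfl⟩
  have hag : ∀ i < l.length, π i = ρ i := history_eq_history_iff.1 (hπ.trans hρ.symm)
  exact (le_abs_self _).trans (hK π ρ fun i hi => hag i (by omega)).le

theorem EveWins.eveWinsFM_of_isUpperSet_or_isLowerSet [Finite V] {G : GameGraph V} {lam : ℝ}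
    {I : Set ℝ} (hwins : G.EveWins fun π => G.DS lam π ∈ I) (h0 : 0 ≤ lam) (h1 : lam < 1) {K : ℕ}
    (hK : ∀ l : List V, l.length = K →
      IsUpperSet (Subtype.val ⁻¹' I : Set (G.outcomes lam l)) ∨
      IsLowerSet (Subtype.val ⁻¹' I : Set (G.outcomes lam l))) :
    G.EveWinsFM fun π => G.DS lam π ∈ I := by
  classical
  obtain ⟨σ, hσ, hwin⟩ := hwins
  obtain ⟨fmax, hmaxE, hmax⟩ := G.exists_positional_DS_ge h0 h1 hσ
  obtain ⟨fmin, hminE, hmin⟩ := G.exists_positional_DS_le h0 h1 hσ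
  let Upper (l : List V) : Prop := IsUpperSet (Subtype.val ⁻¹' I : Set (G.outcomes lam l))
  refine G.eveWinsFM_of_switch hσ (g := fun l => if Upper l then fmax else fmin)
    (fun l v _ => ?_) K fun π hπ => ?_
  · split_ifs
    · exact hmaxE v
    · exact hminE v
  have hπmem : G.DS lam π ∈ G.outcomes lam (history π K) :=
    G.DS_mem_outcomes_history lam fun _ _ => rfl
  by_cases hup : Upper (history π K)
  · rw [if_pos hup] at hπ
    obtain ⟨ρ, hρ, hρσ, hag, hle⟩ := hmax K π hπ
    exact hup (a := ⟨_, G.DS_mem_outcomes_history lam fun i hi => hag i hi.le⟩) (b := ⟨_, hπmem⟩)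
      hle (hwin ρ hρ hρσ)
  · rw [if_neg hup] at hπ
    obtain ⟨ρ, hρ, hρσ, hag, hle⟩ := hmin K π hπ
    have hdown := (hK _ (length_history π K)).resolve_left hup
    exact hdown (a := ⟨_, G.DS_mem_outcomes_history lam fun i hi => hag i hi.le⟩) (b := ⟨_, hπmem⟩)
      hle (hwin ρ hρ hρσ)

end GameGraph

/-- In an interval discounted sum game `(G, I, λ)` with
`λ ∈ (0, 1)` and `I` an interval with nonempty interior (a non-singleton interval),
if Eve has a winning strategy (ensuring `DS_λ(π) ∈ I` for every consistent play),
then she has a finite-memory winning strategy. -/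
theorem stmt12 {V : Type} [Fintype V] (G : GameGraph V) (lam : ℝ)
    (h0 : 0 < lam) (h1 : lam < 1)
    (I : Set ℝ) (hconn : I.OrdConnected) (hint : (interior I).Nonempty) :
    G.EveWins (fun π => G.DS lam π ∈ I) → G.EveWinsFM (fun π => G.DS lam π ∈ I) := by
  intro hwins
  obtain ⟨c, hc⟩ := hint
  have hnontriv : I.Nontrivial :=
    (infinite_of_mem_nhds c (mem_interior_iff_mem_nhds.1 hc)).nontrivial
  obtain ⟨K, hK⟩ := G.exists_isUpperSet_or_isLowerSet_outcomes
    ((abs_of_pos h0).trans_lt h1) hconn hnontriv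
  exact hwins.eveWinsFM_of_isUpperSet_or_isLowerSet h0.le h1 hK
end
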